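/- Let $0<\alpha<1$ and let $S_N(\tau)$ be the $N$-th partial sum of the binomial series of $(1-\tau)^\alpha$. Then for all $\tau$ in the open unit disc and all $N$, $|((1-\tau)S_N'(\tau))'| \le c(1-|\tau|)^{\alpha-1}$ where $c = \alpha + \alpha(1-\alpha)$. -/

import Mathlib

/-- The generalized binomial coefficient `α(α-1)⋯(α-n+1)/n!`. -/
noncomputable def gbinom (α : ℝ) (n : ℕ) : ℝ :=
  (∏ i ∈ Finset.range n, (α - i)) / n.factorial

/-- The partial sums `S_N(τ) = 1 - ∑_{n=1}^N |binom α n| τ^n` of the binomial series. -/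
noncomputable def Spart (α : ℝ) (N : ℕ) (τ : ℂ) : ℂ :=
  1 - ∑ n ∈ Finset.Icc 1 N, ((|gbinom α n| : ℝ) : ℂ) * τ ^ n

/-!
Put `β = 1 - α`. The derivative `S_N'` is `-α P_N`, where `P_N(z) = ∑_{k<N} b_k z^k` is a partial
sum of the binomial series of `(1 - z)^(-β)`, with coefficients `b_k ≥ 0`. The recursion
`(k + 1) b_{k+1} = (β + k) b_k` makes the product with `1 - z` telescope:
`((1 - z) P_{n+1}(z))' = (β - 1) P_n(z) - (n + 1) b_n z^n`. Summed, the same recursion reads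
`n b_n = β ∑_{k<n} b_k`, so `n b_n r^n ≤ β P_n(r)` for `r = |z| ≤ 1`, and the norm of the
right-hand side is at most `(1 - β) P_n(r) + β P_n(r) + b_n r^n = P_{n+1}(r) ≤ (1 - r)^(-β)`.
-/

open Finset Ring

lemma succ_nsmul_multichoose_succ {R : Type*} [Semiring R] [BinomialRing R] (β : R) (k : ℕ) :
    (k + 1) • multichoose β (k + 1) = multichoose β k * (β + k) := by
  have := BinomialRing.toIsAddTorsionFree (R := R)
  refine nsmul_right_injective k.factorial_ne_zero ?_
  calc k.factorial • (k + 1) • multichoose β (k + 1)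
      = (k + 1).factorial • multichoose β (k + 1) := by
        rw [← mul_nsmul', Nat.factorial_succ, mul_comm]
    _ = k.factorial • (multichoose β k * (β + k)) := by
        rw [factorial_nsmul_multichoose_eq_ascPochhammer, ← smul_mul_assoc,
          factorial_nsmul_multichoose_eq_ascPochhammer, Polynomial.ascPochhammer_smeval_eq_eval,
          Polynomial.ascPochhammer_smeval_eq_eval, ascPochhammer_succ_eval]

lemma nsmul_multichoose_eq_sum_mul {R : Type*} [Semiring R] [BinomialRing R] (β : R) (n : ℕ) :
    n • multichoose β n = (∑ k ∈ range n, multichoose β k) * β := by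
  induction n with
  | zero => simp
  | succ n ih =>
    rw [succ_nsmul_multichoose_succ, sum_range_succ, add_mul, ← ih, mul_add, nsmul_eq_mul',
      add_comm]

lemma multichoose_nonneg {R : Type*} [Semiring R] [LinearOrder R] [IsStrictOrderedRing R]
    [BinomialRing R] {β : R} (hβ : 0 ≤ β) (k : ℕ) : 0 ≤ multichoose β k := by
  induction k with
  | zero => simp
  | succ k ih =>
    rw [← nsmul_nonneg_iff k.succ_ne_zero, succ_nsmul_multichoose_succ]
    positivity

lemma hasSum_multichoose_mul_pow (β : ℝ) {x : ℝ} (hx : |x| < 1) :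
    HasSum (fun k ↦ multichoose β k * x ^ k) ((1 - x) ^ (-β)) := by
  have hmem : x ∈ Metric.eball (0 : ℝ) 1 := by
    simpa [enorm_eq_nnnorm, ← NNReal.coe_lt_coe] using hx
  have hx1 : 0 ≤ 1 - x := sub_nonneg.2 (abs_lt.1 hx).2.le
  simpa [FormalMultilinearSeries.ofScalars_apply_eq, multichoose_eq, Real.rpow_neg hx1, mul_comm]
    using (Real.one_div_one_sub_rpow_hasFPowerSeriesOnBall_zero β).hasSum hmem

/-- The sum of the first `n` terms, of degree less than `n`, of the binomial series of
`(1 - z) ^ (-β)`. The parameter `β` lives in a ring of scalars, so that a real `β` can be used both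
with a complex `z` and with the real number `‖z‖`. -/
noncomputable def negBinomialSum {R A : Type*} [Semiring R] [BinomialRing R] [Semiring A]
    [Module R A] (β : R) (n : ℕ) (z : A) : A :=
  ∑ k ∈ range n, multichoose β k • z ^ k

lemma negBinomialSum_succ {R A : Type*} [Semiring R] [BinomialRing R] [Semiring A] [Module R A]
    (β : R) (n : ℕ) (z : A) :
    negBinomialSum β (n + 1) z = negBinomialSum β n z + multichoose β n • z ^ n :=
  sum_range_succ _ n

lemma hasDerivAt_one_sub_mul_negBinomialSum_succ {R 𝕜 : Type*} [CommRing R] [BinomialRing R]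
    [NontriviallyNormedField 𝕜] [Algebra R 𝕜] (β : R) (n : ℕ) (z : 𝕜) :
    HasDerivAt (fun w ↦ (1 - w) * negBinomialSum β (n + 1) w)
      ((β - 1) • negBinomialSum β n z - (n + 1) • multichoose β n • z ^ n) z := by
  have hsub : HasDerivAt (fun w : 𝕜 ↦ 1 - w) (-1) z := (hasDerivAt_id z).const_sub 1
  induction n with
  | zero => simpa [negBinomialSum] using hsub
  | succ n ih =>
    have hrec : (n + 1) * algebraMap R 𝕜 (multichoose β (n + 1)) =
        algebraMap R 𝕜 (multichoose β n) * (algebraMap R 𝕜 β + n) := by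
      simpa using congrArg (algebraMap R 𝕜) (succ_nsmul_multichoose_succ β n)
    have hterm := hsub.fun_mul
      ((hasDerivAt_pow (n + 1) z).const_mul (algebraMap R 𝕜 (multichoose β (n + 1))))
    simp only [nsmul_eq_mul] at ih ⊢
    simp only [negBinomialSum_succ β (n + 1), negBinomialSum_succ β n z, Algebra.smul_def, map_sub,
      map_one, mul_add] at ih ⊢
    refine (ih.fun_add hterm).congr_deriv ?_
    rw [Nat.add_sub_cancel]
    push_cast
    linear_combination z ^ n * hrec

lemma norm_negBinomialSum_le {A : Type*} [NormedRing A] [NormOneClass A] [NormedAlgebra ℝ A]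
    {β : ℝ} (hβ : 0 ≤ β) (n : ℕ) (z : A) : ‖negBinomialSum β n z‖ ≤ negBinomialSum β n ‖z‖ := by
  refine norm_sum_le_of_le _ fun k _ ↦ ?_
  rw [norm_smul, Real.norm_of_nonneg (multichoose_nonneg hβ k)]
  exact mul_le_mul_of_nonneg_left (norm_pow_le z k) (multichoose_nonneg hβ k)

lemma negBinomialSum_le_rpow {β r : ℝ} (hβ : 0 ≤ β) (hr0 : 0 ≤ r) (hr1 : r < 1) (n : ℕ) :
    negBinomialSum β n r ≤ (1 - r) ^ (-β) :=
  sum_le_hasSum _ (fun k _ ↦ mul_nonneg (multichoose_nonneg hβ k) (pow_nonneg hr0 k))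
    (hasSum_multichoose_mul_pow β (by rwa [abs_of_nonneg hr0]))

lemma nsmul_multichoose_mul_pow_le {β r : ℝ} (hβ : 0 ≤ β) (hr0 : 0 ≤ r) (hr1 : r ≤ 1) (n : ℕ) :
    n • multichoose β n * r ^ n ≤ β * negBinomialSum β n r := by
  have hsum : (∑ k ∈ range n, multichoose β k) * r ^ n ≤ negBinomialSum β n r := by
    rw [sum_mul]
    refine sum_le_sum fun k hk ↦ mul_le_mul_of_nonneg_left ?_ (multichoose_nonneg hβ k)
    exact pow_le_pow_of_le_one hr0 hr1 (mem_range.1 hk).le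
  calc n • multichoose β n * r ^ n = β * ((∑ k ∈ range n, multichoose β k) * r ^ n) := by
        rw [nsmul_multichoose_eq_sum_mul]; ring
    _ ≤ β * negBinomialSum β n r := mul_le_mul_of_nonneg_left hsum hβ

lemma norm_smul_negBinomialSum_sub_le {A : Type*} [NormedRing A] [NormOneClass A]
    [NormedAlgebra ℝ A] {β : ℝ} (hβ : 0 ≤ β) (hβ1 : β ≤ 1) (n : ℕ) {z : A} (hz : ‖z‖ ≤ 1) :
    ‖(β - 1) • negBinomialSum β n z - (n + 1) • multichoose β n • z ^ n‖ ≤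
      negBinomialSum β (n + 1) ‖z‖ := by
  have hb := multichoose_nonneg hβ n
  have hlow : ‖(β - 1) • negBinomialSum β n z‖ ≤ (1 - β) * negBinomialSum β n ‖z‖ := by
    rw [norm_smul, Real.norm_of_nonpos (sub_nonpos.2 hβ1), neg_sub]
    exact mul_le_mul_of_nonneg_left (norm_negBinomialSum_le hβ n z) (sub_nonneg.2 hβ1)
  have htop : ‖(n + 1) • multichoose β n • z ^ n‖ ≤ (n + 1) • multichoose β n * ‖z‖ ^ n := by
    rw [← smul_assoc, norm_smul, Real.norm_of_nonneg (nsmul_nonneg hb _)]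
    exact mul_le_mul_of_nonneg_left (norm_pow_le z n) (nsmul_nonneg hb _)
  calc _ ≤ (1 - β) * negBinomialSum β n ‖z‖ + (n + 1) • multichoose β n * ‖z‖ ^ n :=
        norm_sub_le_of_le hlow htop
    _ = (1 - β) * negBinomialSum β n ‖z‖ + n • multichoose β n * ‖z‖ ^ n +
          multichoose β n * ‖z‖ ^ n := by rw [succ_nsmul, add_mul, add_assoc]
    _ ≤ (1 - β) * negBinomialSum β n ‖z‖ + β * negBinomialSum β n ‖z‖ +
          multichoose β n * ‖z‖ ^ n := by
        gcongr _ + ?_ + _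
        exact nsmul_multichoose_mul_pow_le hβ (norm_nonneg z) hz n
    _ = negBinomialSum β (n + 1) ‖z‖ := by rw [negBinomialSum_succ, smul_eq_mul]; ring

lemma succ_mul_gbinom_succ (α : ℝ) (n : ℕ) :
    (n + 1) * gbinom α (n + 1) = (α - n) * gbinom α n := by
  rw [gbinom, gbinom, prod_range_succ, Nat.factorial_succ]
  push_cast
  field_simp

lemma succ_mul_gbinom_succ_eq_multichoose (α : ℝ) (k : ℕ) :
    (k + 1) * gbinom α (k + 1) = (-1) ^ k * (α * multichoose (1 - α) k) := by
  induction k with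
  | zero => simp [gbinom]
  | succ k ih =>
    have hrec := succ_nsmul_multichoose_succ (1 - α) k
    rw [nsmul_eq_mul] at hrec
    have hk : (k + 1 : ℝ) ≠ 0 := k.cast_add_one_ne_zero
    rw [succ_mul_gbinom_succ]
    refine mul_left_cancel₀ hk ?_
    push_cast at hrec ⊢
    linear_combination (α - (k + 1)) * ih + (-1) ^ k * α * hrec

lemma succ_mul_abs_gbinom_succ {α : ℝ} (hα0 : 0 ≤ α) (hα1 : α ≤ 1) (k : ℕ) :
    (k + 1) * |gbinom α (k + 1)| = α * multichoose (1 - α) k := by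
  have hb := mul_nonneg hα0 (multichoose_nonneg (sub_nonneg.2 hα1) k)
  have habs := congrArg abs (succ_mul_gbinom_succ_eq_multichoose α k)
  rwa [abs_mul, abs_mul, abs_neg_one_pow, one_mul, abs_of_nonneg hb,
    abs_of_nonneg k.cast_add_one_pos.le] at habs

lemma hasDerivAt_Spart {α : ℝ} (hα0 : 0 ≤ α) (hα1 : α ≤ 1) (N : ℕ) (τ : ℂ) :
    HasDerivAt (Spart α N) (-(α • negBinomialSum (1 - α) N τ)) τ := by
  have hterm (k : ℕ) : HasDerivAt (fun σ : ℂ ↦ ((|gbinom α (k + 1)| : ℝ) : ℂ) * σ ^ (k + 1))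
      (α • multichoose (1 - α) k • τ ^ k) τ := by
    refine ((hasDerivAt_pow (k + 1) τ).const_mul _).congr_deriv ?_
    have hcoeff := congrArg Complex.ofReal (succ_mul_abs_gbinom_succ hα0 hα1 k)
    simp only [Complex.real_smul, Nat.add_sub_cancel]
    push_cast at hcoeff ⊢
    linear_combination τ ^ k * hcoeff
  have hS : Spart α N =
      fun σ ↦ 1 - ∑ k ∈ range N, ((|gbinom α (k + 1)| : ℝ) : ℂ) * σ ^ (k + 1) := by
    ext σ
    rw [Spart, range_eq_Ico, sum_Ico_add' (fun n ↦ ((|gbinom α n| : ℝ) : ℂ) * σ ^ n)]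
    rfl
  rw [hS, negBinomialSum, smul_sum]
  exact (HasDerivAt.fun_sum fun k _ ↦ hterm k).const_sub 1

theorem stmt4_general (α : ℝ) (hα0 : 0 ≤ α) (hα1 : α ≤ 1) (N : ℕ) (τ : ℂ) (hτ : ‖τ‖ < 1) :
    ‖deriv (fun σ : ℂ ↦ (1 - σ) * deriv (Spart α N) σ) τ‖ ≤ α * (1 - ‖τ‖) ^ (α - 1) := by
  have hβ : 0 ≤ 1 - α := sub_nonneg.2 hα1
  have hfun : (fun σ : ℂ ↦ (1 - σ) * deriv (Spart α N) σ) =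
      fun σ ↦ (-α) • ((1 - σ) * negBinomialSum (1 - α) N σ) := by
    ext σ
    rw [(hasDerivAt_Spart hα0 hα1 N σ).deriv, ← neg_smul, mul_smul_comm]
  rw [hfun]
  cases N with
  | zero =>
    have := Real.rpow_nonneg (sub_nonneg.2 hτ.le) (α - 1)
    simpa [negBinomialSum] using mul_nonneg hα0 this
  | succ n =>
    rw [((hasDerivAt_one_sub_mul_negBinomialSum_succ (1 - α) n τ).fun_const_smul (-α)).deriv,
      norm_smul, norm_neg, Real.norm_of_nonneg hα0, ← neg_sub 1 α]
    gcongr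
    exact (norm_smul_negBinomialSum_sub_le hβ (sub_le_self 1 hα0) n hτ.le).trans
      (negBinomialSum_le_rpow hβ (norm_nonneg τ) hτ (n + 1))

/-- `|((1-τ)S_N'(τ))'| ≤ c(1-|τ|)^(α-1)` on the open unit disc,
with `c = α + α(1-α)`. -/
theorem stmt4 (α : ℝ) (hα0 : 0 < α) (hα1 : α < 1) (N : ℕ) (τ : ℂ) (hτ : ‖τ‖ < 1) :
    ‖deriv (fun σ : ℂ => (1 - σ) * deriv (Spart α N) σ) τ‖ ≤
      (α + α * (1 - α)) * (1 - ‖τ‖) ^ (α - 1) := by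
  refine (stmt4_general α hα0.le hα1.le N τ hτ).trans (mul_le_mul_of_nonneg_right ?_ ?_)
  exacts [le_add_of_nonneg_right (mul_nonneg hα0.le (sub_nonneg.2 hα1.le)),
    Real.rpow_nonneg (sub_nonneg.2 hτ.le) _]
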